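/- Lemma 3.4: Assume κ ≤ λ are regular cardinals, λ is infinite, ι is a finite nonempty index type, and 𝓛 satisfies the κ-chain condition. Then M has cardinality ≥ λ if and only if there exists a tuple ā ∈ (ι → M) such that φ_ā has cardinality ≥ λ. -/

import Mathlib

/-!
If `M` is large but every `φ a` has size `< λ`, then `ι → M` is not covered by fewer than `κ ≤ λ` of
the sets `φ a`, because `λ` is regular. Transfinite recursion therefore yields tuples `f β` with
`f β ∉ φ (f α)` for all `α < β < κ`, so that `φ (f β) ⊆ φ (f α)` always fails: this contradicts the
chain condition. Conversely, since `ι` is finite, `ι → M` has size `< λ` as soon as `M` does.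
-/

/-- If every family of tuples indexed by the ordinals below `β < o` admits a tuple avoiding all its
sets, one sequence of tuples avoids all its earlier sets at every stage below `o`. -/
theorem exists_avoiding_seq.{u, v} {X : Type v} (φ : X → Set X) (x₀ : X) (o : Ordinal.{u})
    (h : ∀ β < o, ∀ f : Ordinal.{u} → X, ∃ x, ∀ α < β, x ∉ φ (f α)) :
    ∃ f : Ordinal.{u} → X, ∀ β < o, ∀ α < β, f β ∉ φ (f α) := by
  classical
  let step (β : Ordinal.{u}) (g : ∀ α, α < β → X) : X :=
    if hx : ∃ x, ∀ α (hα : α < β), x ∉ φ (g α hα) then hx.choose else x₀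
  let f : Ordinal.{u} → X := Ordinal.lt_wf.fix step
  refine ⟨f, fun β hβ => ?_⟩
  have hx : ∃ x, ∀ α (_ : α < β), x ∉ φ (f α) := h β hβ f
  have hf : f β = hx.choose := (Ordinal.lt_wf.fix_eq step β).trans (dif_pos hx)
  rw [hf]
  exact hx.choose_spec

theorem exists_avoiding.{u} {X : Type u} (φ : X → Set X) (kap lam : Cardinal.{u})
    (hlreg : lam.IsRegular) (hkl : kap ≤ lam) (hX : lam ≤ Cardinal.mk X)
    (hφ : ∀ a, Cardinal.mk (φ a) < lam) (β : Ordinal.{u}) (hβ : β < kap.ord)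
    (f : Ordinal.{u} → X) : ∃ x, ∀ α < β, x ∉ φ (f α) := by
  by_contra! hcov
  -- `β.ToType` indexes the union, as `Set.Iio β` lives one universe too high.
  have hU : (⋃ t : β.ToType, φ (f (Ordinal.ToType.mk.symm t).1)) = Set.univ := by
    refine Set.eq_univ_of_forall fun x => ?_
    obtain ⟨α, hα, hx⟩ := hcov x
    exact Set.mem_iUnion.2 ⟨Ordinal.ToType.mk ⟨α, hα⟩, by simpa using hx⟩
  have hcard : Cardinal.mk β.ToType < lam := by
    rw [Cardinal.mk_toType]
    exact (Cardinal.lt_ord.1 hβ).trans_le hkl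
  have hlt := (Cardinal.card_iUnion_lt_iff_forall_of_isRegular hlreg hcard).2
    fun t => hφ (f (Ordinal.ToType.mk.symm t).1)
  rw [hU, Cardinal.mk_univ] at hlt
  exact hlt.not_ge hX

/-- Lemma 3.4: for a frame with the κ-chain condition (κ ≤ λ regular, λ infinite,
ι finite nonempty), `M` has cardinality ≥ λ iff some `φ a` has cardinality ≥ λ. -/
theorem stmt_4.{u}
    {M ι : Type u} [AddCommGroup M] [Finite ι] [Nonempty ι]
    (L : Set (Set (ι → M)))
    (hsub : ∀ A ∈ L, ∃ S : AddSubgroup (ι → M), A = ↑S)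
    (φ : (ι → M) → Set (ι → M))
    (hφL : ∀ a, φ a ∈ L)
    (hφmem : ∀ a, a ∈ φ a)
    (hφmin : ∀ a, ∀ ψ ∈ L, a ∈ ψ → φ a ⊆ ψ)
    (kap lam : Cardinal) (hkreg : kap.IsRegular) (hlreg : lam.IsRegular)
    (hkl : kap ≤ lam) (hlinf : Cardinal.aleph0 ≤ lam)
    (hchain : ∀ A : Ordinal → Set (ι → M),
      (∀ α : Ordinal, α < kap.ord → A α ∈ L) →
      ∃ α β : Ordinal, α < β ∧ β < kap.ord ∧ A β ⊆ A α) :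
    lam ≤ Cardinal.mk M ↔ ∃ a : ι → M, lam ≤ Cardinal.mk ↥(φ a) := by
  constructor
  · intro hM
    by_contra! hφ
    have hX : lam ≤ Cardinal.mk (ι → M) :=
      hM.trans (Cardinal.mk_le_of_injective (Function.const_injective (α := ι) (β := M)))
    obtain ⟨f, hf⟩ := exists_avoiding_seq φ 0 kap.ord
      (exists_avoiding φ kap lam hlreg hkl hX hφ)
    obtain ⟨α, β, hαβ, hβ, hsubset⟩ := hchain (fun α => φ (f α)) fun _ _ => hφL _
    exact hf β hβ α hαβ (hsubset (hφmem (f β)))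
  · rintro ⟨a, ha⟩
    have hpow : lam ≤ Cardinal.mk (ι → M) := ha.trans (Cardinal.mk_set_le _)
    rcases finite_or_infinite M with hfin | hinf
    · exact absurd (hlinf.trans hpow) (Cardinal.lt_aleph0_of_finite (ι → M)).not_ge
    · rw [← Cardinal.power_def] at hpow
      exact hpow.trans (Cardinal.pow_le (Cardinal.aleph0_le_mk M) (Cardinal.lt_aleph0_of_finite ι))
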